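/- arXiv:1709.04907 — 8 statements merged into one kernel-verified Lean document; each statement's English description precedes it below -/
import Mathlib

section
/- Let A', A, B', B be finite nonempty types. Let ρ : Matrix (A' × A × B') (A' × A × B') ℂ and J : Matrix (A × B) (A × B) ℂ be positive semidefinite. Suppose C, D : Matrix (A' × A × B') (A' × A × B') ℂ are positive semidefinite with ρ ≤ T_{B'}(C − D), and V, Y : Matrix (A × B) (A × B) ℂ are positive semidefinite with J ≤ T_B(V − Y), and μ : ℝ satisfies Tr_B(V + Y) ≤ μ • (1 : Matrix A A ℂ). Define ω : Matrix (A' × B × B') (A' × B × B') ℂ by ω (a',b,b') (â',b̂,b̂') = ∑_{a,â} ρ (a',a,b') (â',â,b̂') * J (a,b) (â,b̂). Then there exist positive semidefinite E, F : Matrix (A' × B × B') (A' × B × B') ℂ such that ω ≤ T_{BB'}(E − F) and Re(trace(E + F)) ≤ μ * Re(trace(C + D)). (This is the feasibility-transfer form of Proposition 1: amortization does not enhance the max-Rains information; here J plays the role of the Choi operator of the channel and ω = N(ρ).) -/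
open Matrix ComplexOrder

noncomputable section

/-- Partial transpose over the last (`γ`) factor of a matrix on `α × β × γ`:
`T_γ(X) (a,b,c) (a',b',c') = X (a,b,c') (a',b',c)`. -/
def ptLast {α β γ : Type*} (X : Matrix (α × β × γ) (α × β × γ) ℂ) :
    Matrix (α × β × γ) (α × β × γ) ℂ :=
  Matrix.of fun x y => X (x.1, x.2.1, y.2.2) (y.1, y.2.1, x.2.2)

/-- Partial transpose over `β` of a matrix on `α × β`:
`T_β(X) (a,b) (a',b') = X (a,b') (a',b)`. -/
def ptSnd {α β : Type*} (X : Matrix (α × β) (α × β) ℂ) : Matrix (α × β) (α × β) ℂ :=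
  Matrix.of fun x y => X (x.1, y.2) (y.1, x.2)

/-- Joint partial transpose over `β` and `γ` of a matrix on `α × β × γ`:
`T_{βγ}(X) (a,b,c) (a',b',c') = X (a,b',c') (a',b,c)`. -/
def ptBoth {α β γ : Type*} (X : Matrix (α × β × γ) (α × β × γ) ℂ) :
    Matrix (α × β × γ) (α × β × γ) ℂ :=
  Matrix.of fun x y => X (x.1, y.2.1, y.2.2) (y.1, x.2.1, x.2.2)

/-- Partial trace over the second factor: `(Tr_β X) a a' = ∑ b, X (a,b) (a',b)`. -/
def ptrSnd {α β : Type*} [Fintype β] (X : Matrix (α × β) (α × β) ℂ) : Matrix α α ℂ :=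
  Matrix.of fun a a' => ∑ b, X (a, b) (a', b)

/-- Link product over the shared factor. -/
def linkP {A' A B' B : Type*} [Fintype A]
    (X : Matrix (A' × A × B') (A' × A × B') ℂ) (Z : Matrix (A × B) (A × B) ℂ) :
    Matrix (A' × B × B') (A' × B × B') ℂ :=
  Matrix.of fun x y => ∑ a : A, ∑ a2 : A,
    X (x.1, a, x.2.2) (y.1, a2, y.2.2) * Z (a, x.2.1) (a2, y.2.1)

lemma linkP_sub_left {A' A B' B : Type*} [Fintype A]
    (X X' : Matrix (A' × A × B') (A' × A × B') ℂ) (Z : Matrix (A × B) (A × B) ℂ) :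
    linkP (X - X') Z = linkP X Z - linkP X' Z := by
  ext x y
  simp [linkP, sub_mul, Finset.sum_sub_distrib]

lemma linkP_sub_right {A' A B' B : Type*} [Fintype A]
    (X : Matrix (A' × A × B') (A' × A × B') ℂ) (Z Z' : Matrix (A × B) (A × B) ℂ) :
    linkP X (Z - Z') = linkP X Z - linkP X Z' := by
  ext x y
  simp [linkP, mul_sub, Finset.sum_sub_distrib]

lemma linkP_add_left {A' A B' B : Type*} [Fintype A]
    (X X' : Matrix (A' × A × B') (A' × A × B') ℂ) (Z : Matrix (A × B) (A × B) ℂ) :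
    linkP (X + X') Z = linkP X Z + linkP X' Z := by
  ext x y
  simp [linkP, add_mul, Finset.sum_add_distrib]

lemma linkP_add_right {A' A B' B : Type*} [Fintype A]
    (X : Matrix (A' × A × B') (A' × A × B') ℂ) (Z Z' : Matrix (A × B) (A × B) ℂ) :
    linkP X (Z + Z') = linkP X Z + linkP X Z' := by
  ext x y
  simp [linkP, mul_add, Finset.sum_add_distrib]

lemma linkP_pt {A' A B' B : Type*} [Fintype A]
    (X : Matrix (A' × A × B') (A' × A × B') ℂ) (Z : Matrix (A × B) (A × B) ℂ) :
    linkP (ptLast X) (ptSnd Z) = ptBoth (linkP X Z) := by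
  ext x y
  simp [linkP, ptLast, ptSnd, ptBoth]

lemma linkP_posSemidef {A' A B' B : Type*}
    [Fintype A'] [Fintype A] [Fintype B'] [Fintype B]
    {X : Matrix (A' × A × B') (A' × A × B') ℂ} {Z : Matrix (A × B) (A × B) ℂ}
    (hX : X.PosSemidef) (hZ : Z.PosSemidef) : (linkP X Z).PosSemidef := by
  classical
  have hK : (Matrix.kronecker X Z).PosSemidef := hX.kronecker hZ
  have h2 := hK.submatrix
    (fun p : (A' × B × B') × A => (((p.1.1, p.2, p.1.2.2) : A' × A × B'), ((p.2, p.1.2.1) : A × B)))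
  have h3 := h2.conjTranspose_mul_mul_same
    (Matrix.of fun (p : (A' × B × B') × A) (q : A' × B × B') => if p.1 = q then (1 : ℂ) else 0)
  convert h3 using 1
  ext x y
  simp only [linkP, Matrix.mul_apply, Matrix.of_apply, Matrix.conjTranspose_apply,
    Matrix.submatrix_apply]
  rw [Fintype.sum_prod_type]
  simp only [Fintype.sum_prod_type (α₁ := A' × B × B')]
  simp only [apply_ite, star_one, star_zero, ite_mul, one_mul, zero_mul, mul_ite, mul_one, mul_zero,
    Matrix.kronecker, Matrix.kroneckerMap_apply]
  rw [Finset.sum_eq_single y, Finset.sum_comm]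
  · refine Finset.sum_congr rfl fun a2 _ => ?_
    simp only [if_true]
    rw [Finset.sum_eq_single x]
    · simp
    · intro b _ hb; simp [hb]
    · simp
  · intro b _ hb; simp [hb]
  · simp

lemma linkP_trace {A' A B' B : Type*}
    [Fintype A'] [Fintype A] [Fintype B'] [Fintype B]
    (X : Matrix (A' × A × B') (A' × A × B') ℂ) (Z : Matrix (A × B) (A × B) ℂ) :
    (linkP X Z).trace =
      (linkP X ((ptrSnd Z).submatrix (Prod.fst : A × Unit → A) Prod.fst)).trace := by
  simp only [Matrix.trace, Matrix.diag_apply, linkP, Matrix.of_apply, ptrSnd,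
    Matrix.submatrix_apply, Fintype.sum_prod_type, Finset.univ_unique, Finset.sum_singleton,
    Finset.mul_sum]
  refine Finset.sum_congr rfl fun a' _ => ?_
  rw [Finset.sum_comm]
  refine Finset.sum_congr rfl fun b' _ => ?_
  rw [Finset.sum_comm]
  refine Finset.sum_congr rfl fun a _ => ?_
  rw [Finset.sum_comm]

lemma linkP_trace_one {A' A B' : Type*}
    [Fintype A'] [Fintype A] [Fintype B'] [DecidableEq A] (μ : ℝ)
    (X : Matrix (A' × A × B') (A' × A × B') ℂ) :
    (linkP X ((μ • (1 : Matrix A A ℂ)).submatrix (Prod.fst : A × Unit → A) Prod.fst)).trace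
      = μ * X.trace := by
  simp only [Matrix.trace, Matrix.diag_apply, linkP, Matrix.of_apply,
    Matrix.submatrix_apply, Fintype.sum_prod_type, Finset.univ_unique, Finset.sum_singleton,
    Finset.mul_sum, Matrix.smul_apply, Matrix.one_apply]
  refine Finset.sum_congr rfl fun a' _ => ?_
  rw [Finset.sum_comm]
  refine Finset.sum_congr rfl fun a _ => Finset.sum_congr rfl fun b' _ => ?_
  simp [mul_comm]

/-- Feasibility-transfer form of Proposition 1 (amortization does not enhance
the max-Rains information). -/
theorem amortization_max_rains_feasibility_transfer
    {A' A B' B : Type*}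
    [Fintype A'] [Fintype A] [Fintype B'] [Fintype B] [DecidableEq A]
    [Nonempty A'] [Nonempty A] [Nonempty B'] [Nonempty B]
    (ρ : Matrix (A' × A × B') (A' × A × B') ℂ) (J : Matrix (A × B) (A × B) ℂ)
    (hρ : ρ.PosSemidef) (hJ : J.PosSemidef)
    (C D : Matrix (A' × A × B') (A' × A × B') ℂ)
    (hC : C.PosSemidef) (hD : D.PosSemidef)
    (hCD : (ptLast (C - D) - ρ).PosSemidef)
    (V Y : Matrix (A × B) (A × B) ℂ)
    (hV : V.PosSemidef) (hY : Y.PosSemidef)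
    (hVY : (ptSnd (V - Y) - J).PosSemidef)
    (μ : ℝ) (hμ : (μ • (1 : Matrix A A ℂ) - ptrSnd (V + Y)).PosSemidef)
    (ω : Matrix (A' × B × B') (A' × B × B') ℂ)
    (hω : ∀ x y, ω x y = ∑ a : A, ∑ a2 : A,
      ρ (x.1, a, x.2.2) (y.1, a2, y.2.2) * J (a, x.2.1) (a2, y.2.1)) :
    ∃ E F : Matrix (A' × B × B') (A' × B × B') ℂ,
      E.PosSemidef ∧ F.PosSemidef ∧ (ptBoth (E - F) - ω).PosSemidef ∧
        ((E + F).trace).re ≤ μ * ((C + D).trace).re := by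
  have hω' : ω = linkP ρ J := by
    ext x y
    simp [hω, linkP]
  have hP : (ptLast (C - D)).PosSemidef := by
    have := hCD.add hρ
    rwa [sub_add_cancel] at this
  refine ⟨linkP C V + linkP D Y, linkP C Y + linkP D V,
    (linkP_posSemidef hC hV).add (linkP_posSemidef hD hY),
    (linkP_posSemidef hC hY).add (linkP_posSemidef hD hV), ?_, ?_⟩
  · have h := (linkP_posSemidef hCD hJ).add (linkP_posSemidef hP hVY)
    have e : linkP C V + linkP D Y - (linkP C Y + linkP D V) = linkP (C - D) (V - Y) := by
      rw [linkP_sub_left, linkP_sub_right, linkP_sub_right]; abel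
    rw [e, hω', ← linkP_pt]
    convert h using 1
    rw [linkP_sub_left (ptLast (C - D)), linkP_sub_right (ptLast (C - D))]
    abel
  · have e : linkP C V + linkP D Y + (linkP C Y + linkP D V) = linkP (C + D) (V + Y) := by
      rw [linkP_add_left, linkP_add_right, linkP_add_right]; abel
    have h := (linkP_posSemidef (hC.add hD)
      (hμ.submatrix (Prod.fst : A × Unit → A))).trace_nonneg
    rw [Matrix.submatrix_sub, Pi.sub_apply, Pi.sub_apply, linkP_sub_right, Matrix.trace_sub,
      ← linkP_trace, linkP_trace_one] at h
    have h' := (Complex.le_def.1 h).1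
    rw [e]
    simp only [Complex.zero_re, Complex.sub_re, Complex.re_ofReal_mul] at h'
    linarith
end
end

section
/- Let M, A, N be finite types, and let P : Matrix (M × A) (M × A) ℂ and Q : Matrix (A × N) (A × N) ℂ be positive semidefinite. Then the contraction R : Matrix (M × N) (M × N) ℂ defined by R (m,n) (m',n') = ∑_{a,a'} P (m,a) (m',a') * Q (a,n) (a',n') is positive semidefinite. -/
open Matrix ComplexOrder Kronecker

noncomputable section

/-- Membership in the separable cone `SEP(α:β)`. -/
def InSepCone {α β : Type*} [Fintype α] [Fintype β] (X : Matrix (α × β) (α × β) ℂ) : Prop :=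
  ∃ (n : ℕ) (P : Fin n → Matrix α α ℂ) (Q : Fin n → Matrix β β ℂ),
    (∀ i, (P i).PosSemidef) ∧ (∀ i, (Q i).PosSemidef) ∧
    ∀ x y : α × β, X x y = ∑ i, P i x.1 y.1 * Q i x.2 y.2

/-- The contraction of two positive semidefinite matrices over a shared tensor
factor is positive semidefinite. -/
theorem contraction_posSemidef
    {M A N : Type*} [Fintype M] [Fintype A] [Fintype N]
    (P : Matrix (M × A) (M × A) ℂ) (Q : Matrix (A × N) (A × N) ℂ)
    (hP : P.PosSemidef) (hQ : Q.PosSemidef) :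
    (Matrix.of fun x y : M × N => ∑ a : A, ∑ a2 : A,
        P (x.1, a) (y.1, a2) * Q (a, x.2) (a2, y.2)).PosSemidef := by
  classical
  have hK := (hP.kronecker hQ).submatrix
    (fun z : (M × N) × A => ((z.1.1, z.2), (z.2, z.1.2)))
  have h := hK.conjTranspose_mul_mul_same
    (Matrix.of fun (z : (M × N) × A) (y : M × N) => if z.1 = y then (1 : ℂ) else 0)
  refine (congrArg Matrix.PosSemidef ?_).mpr h
  ext x y
  simp only [Matrix.mul_apply, Matrix.of_apply, Matrix.conjTranspose_apply,
    Matrix.submatrix_apply, Matrix.kroneckerMap_apply]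
  rw [Fintype.sum_prod_type, Finset.sum_eq_single y]
  · rw [Finset.sum_comm]
    refine Finset.sum_congr rfl fun a2 _ => ?_
    rw [Fintype.sum_prod_type, Finset.sum_eq_single x]
    · simp
    · intro b _ hb
      simp [hb]
    · simp
  · intro b _ hb
    simp [hb]
  · simp
end
end

section
/- Let M, A, N be finite types, and let P : Matrix (M × A) (M × A) ℂ and Q : Matrix (A × N) (A × N) ℂ be arbitrary matrices. Let R : Matrix (M × N) (M × N) ℂ be their contraction over A, R (m,n) (m',n') = ∑_{a,a'} P (m,a) (m',a') * Q (a,n) (a',n'). Then trace R = trace (P * ((1 : Matrix M M ℂ) ⊗ₖ (Tr_N Q)ᵀ)), where Tr_N Q is the partial trace of Q over N, ⊗ₖ is the Kronecker product, and ᵀ is the transpose. -/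
open Matrix ComplexOrder Kronecker

noncomputable section

/-- Trace of the contraction:
`Tr R = Tr (P * (1 ⊗ₖ (Tr_N Q)ᵀ))`. -/
theorem contraction_trace_eq
    {M A N : Type*} [Fintype M] [Fintype A] [Fintype N] [DecidableEq M]
    (P : Matrix (M × A) (M × A) ℂ) (Q : Matrix (A × N) (A × N) ℂ) :
    (Matrix.of fun x y : M × N => ∑ a : A, ∑ a2 : A,
        P (x.1, a) (y.1, a2) * Q (a, x.2) (a2, y.2)).trace
      = (P * ((1 : Matrix M M ℂ) ⊗ₖ (ptrSnd Q)ᵀ)).trace := by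
  simp only [Matrix.trace, Matrix.diag_apply, Matrix.mul_apply, Fintype.sum_prod_type,
    Matrix.of_apply, Matrix.kroneckerMap_apply, Matrix.transpose_apply, ptrSnd,
    Matrix.one_apply]
  refine Finset.sum_congr rfl fun m _ => ?_
  rw [Finset.sum_comm]
  refine Finset.sum_congr rfl fun a _ => ?_
  rw [Finset.sum_comm, Finset.sum_comm (s := (Finset.univ : Finset M))]
  refine Finset.sum_congr rfl fun a2 _ => ?_
  rw [Finset.sum_eq_single m]
  · simp [Finset.mul_sum]
  · intro b _ hb
    simp [hb]
  · intro h
    exact absurd (Finset.mem_univ m) h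
end
end

section
/- Let M, A, N be finite types. Let ρ, X : Matrix (M × A) (M × A) ℂ and J, Z : Matrix (A × N) (A × N) ℂ be such that ρ and J are positive semidefinite, ρ ≤ X, and J ≤ Z. Then the contraction over A of ρ and J is Loewner-dominated by the contraction over A of X and Z; that is, the matrix with entries ∑_{a,a'} ρ (m,a) (m',a') * J (a,n) (a',n') is ≤ the matrix with entries ∑_{a,a'} X (m,a) (m',a') * Z (a,n) (a',n'). -/
open Matrix ComplexOrder Kronecker

noncomputable section

theorem contraction_posSemidef_aux
    {M A N : Type*} [Fintype M] [Fintype A] [Fintype N]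
    {P : Matrix (M × A) (M × A) ℂ} {Q : Matrix (A × N) (A × N) ℂ}
    (hP : P.PosSemidef) (hQ : Q.PosSemidef) :
    (Matrix.of fun x y : M × N => ∑ a : A, ∑ a2 : A,
        P (x.1, a) (y.1, a2) * Q (a, x.2) (a2, y.2)).PosSemidef := by
  classical
  have hK := (hP.kronecker hQ).submatrix
    (fun z : (M × N) × A => ((z.1.1, z.2), (z.2, z.1.2)))
  have h := hK.conjTranspose_mul_mul_same
    (Matrix.of fun (z : (M × N) × A) (y : M × N) => if z.1 = y then (1 : ℂ) else 0)
  refine (congrArg Matrix.PosSemidef ?_).mp h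
  symm
  ext x y
  simp only [Matrix.mul_apply, Matrix.conjTranspose_apply, Matrix.of_apply,
    Matrix.submatrix_apply, Matrix.kroneckerMap_apply, Fintype.sum_prod_type (α₁ := M × N),
    apply_ite star, star_one, star_zero, ite_mul, mul_ite, one_mul, zero_mul, mul_one, mul_zero]
  rw [Finset.sum_comm]
  rw [Finset.sum_eq_single y (by intro b _ hb; simp [hb]) (by simp)]
  refine Finset.sum_congr rfl fun a2 _ => ?_
  rw [if_pos rfl, Finset.sum_eq_single x (by intro b _ hb; simp [hb]) (by simp)]
  simp

/-- Loewner monotonicity of the contraction: if `0 ≤ ρ ≤ X` and `0 ≤ J ≤ Z`,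
then the contraction of `ρ` and `J` is dominated by that of `X` and `Z`. -/
theorem contraction_loewner_mono
    {M A N : Type*} [Fintype M] [Fintype A] [Fintype N]
    (ρ X : Matrix (M × A) (M × A) ℂ) (J Z : Matrix (A × N) (A × N) ℂ)
    (hρ : ρ.PosSemidef) (hJ : J.PosSemidef)
    (hρX : (X - ρ).PosSemidef) (hJZ : (Z - J).PosSemidef) :
    ((Matrix.of fun x y : M × N => ∑ a : A, ∑ a2 : A,
        X (x.1, a) (y.1, a2) * Z (a, x.2) (a2, y.2))
      - (Matrix.of fun x y : M × N => ∑ a : A, ∑ a2 : A,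
        ρ (x.1, a) (y.1, a2) * J (a, x.2) (a2, y.2))).PosSemidef := by
  have hZ : Z.PosSemidef := by simpa using hJ.add hJZ
  have h := (contraction_posSemidef_aux hρX hZ).add (contraction_posSemidef_aux hρ hJZ)
  convert h using 1
  ext x y
  simp only [Matrix.sub_apply, Matrix.add_apply, Matrix.of_apply,
    ← Finset.sum_add_distrib, ← Finset.sum_sub_distrib]
  refine Finset.sum_congr rfl fun a _ => Finset.sum_congr rfl fun a2 _ => ?_
  ring
end
end

section
/- Let A and B be finite nonempty types and let ρ : Matrix (A × B) (A × B) ℂ be positive semidefinite with trace ρ = 1. Then sInf {c : ℝ | ∃ σ : Matrix (A × B) (A × B) ℂ, σ ∈ SEP(A:B) ∧ trace σ = 1 ∧ ρ ≤ c • σ} = sInf {t : ℝ | ∃ X : Matrix (A × B) (A × B) ℂ, X ∈ SEP(A:B) ∧ ρ ≤ X ∧ t = Re(trace X)}. (This is Lemma 2: the max-relative entropy of entanglement satisfies E_max(A;B)_ρ = log₂ W_sep(A;B)_ρ, where W_sep(A;B)_ρ = min{Tr X : ρ ≤ X, X in the separable cone}.) -/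
open Matrix ComplexOrder Kronecker

noncomputable section

theorem inSepCone_smul_aux {α β : Type*} [Fintype α] [Fintype β]
    {X : Matrix (α × β) (α × β) ℂ} (hX : InSepCone X) {r : ℝ} (hr : 0 ≤ r) :
    InSepCone (r • X) := by
  obtain ⟨n, P, Q, hP, hQ, h⟩ := hX
  refine ⟨n, fun i => r • P i, Q, fun i => (hP i).smul hr, hQ, fun x y => ?_⟩
  simp only [Matrix.smul_apply, h, Finset.smul_sum, smul_mul_assoc]

/-- Lemma 2: `E_max(A;B)_ρ = log₂ W_sep(A;B)_ρ`, stated as equality of the two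
optimization values. -/
theorem emax_eq_wsep
    {A B : Type*} [Fintype A] [Fintype B] [Nonempty A] [Nonempty B]
    (ρ : Matrix (A × B) (A × B) ℂ) (hρ : ρ.PosSemidef) (hTr : ρ.trace = 1) :
    sInf {c : ℝ | ∃ σ : Matrix (A × B) (A × B) ℂ,
        InSepCone σ ∧ σ.trace = 1 ∧ (c • σ - ρ).PosSemidef}
      = sInf {t : ℝ | ∃ X : Matrix (A × B) (A × B) ℂ,
        InSepCone X ∧ (X - ρ).PosSemidef ∧ t = (X.trace).re} := by
  congr 1
  ext c
  constructor
  · rintro ⟨σ, hσ, ht, hp⟩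
    have h1 := hp.trace_nonneg
    rw [Matrix.trace_sub, Matrix.trace_smul, ht, hTr] at h1
    have h2 := (Complex.le_def.mp h1).1
    simp at h2
    refine ⟨c • σ, inSepCone_smul_aux hσ (by linarith), hp, ?_⟩
    rw [Matrix.trace_smul, ht]
    simp
  · rintro ⟨X, hX, hp, rfl⟩
    have h1 := hp.trace_nonneg
    rw [Matrix.trace_sub, hTr] at h1
    have h2 := Complex.le_def.mp h1
    simp at h2
    obtain ⟨h2, h3⟩ := h2
    have hpos : 0 < X.trace.re := by linarith
    have hre : X.trace = (X.trace.re : ℂ) := Complex.ext (by simp) (by simp [← h3])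
    refine ⟨X.trace.re⁻¹ • X, inSepCone_smul_aux hX (by positivity), ?_, ?_⟩
    · rw [Matrix.trace_smul, Complex.real_smul]
      nth_rewrite 2 [hre]
      rw [← Complex.ofReal_mul, inv_mul_cancel₀ hpos.ne', Complex.ofReal_one]
    · rw [smul_smul, mul_inv_cancel₀ hpos.ne', one_smul]
      exact hp
end
end

section
/- Let A', A, B', B be finite nonempty types. Let ρ : Matrix (A' × A × B') (A' × A × B') ℂ and J : Matrix (A × B) (A × B) ℂ be positive semidefinite. Suppose C : Matrix (A' × A × B') (A' × A × B') ℂ admits a separable decomposition across (A'×A):B', i.e. there exist n : ℕ and positive semidefinite P : Fin n → Matrix (A' × A) (A' × A) ℂ and Q : Fin n → Matrix B' B' ℂ with C (a',a,b') (â',â,b̂') = ∑ i, P i (a',a) (â',â) * Q i b' b̂', and that ρ ≤ C. Suppose Y ∈ SEP(A:B) with J ≤ Y, and μ : ℝ satisfies Tr_B Y ≤ μ • (1 : Matrix A A ℂ). Define E : Matrix (A' × B × B') (A' × B × B') ℂ by E (a',b,b') (â',b̂,b̂') = ∑_{a,â} C (a',a,b') (â',â,b̂') * Y (a,b) (â,b̂),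 and ω : Matrix (A' × B × B') (A' × B × B') ℂ by ω (a',b,b') (â',b̂,b̂') = ∑_{a,â} ρ (a',a,b') (â',â,b̂') * J (a,b) (â,b̂). Then: (i) ω ≤ E; (ii) E admits a separable decomposition across A':(B×B'), i.e. there exist m : ℕ and positive semidefinite R : Fin m → Matrix A' A' ℂ and W : Fin m → Matrix (B × B') (B × B') ℂ with E (a',b,b') (â',b̂,b̂') = ∑ i, R i a' â' * W i (b,b') (b̂,b̂'); and (iii) Re(trace E) ≤ μ * Re(trace C). (This is the feasibility-transfer form of Proposition 3: amortization does not increase a channel's max-relative entropy of entanglement.) -/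
open Matrix ComplexOrder Kronecker

noncomputable section

theorem aux_collapse {S A : Type*} [Fintype S] [Fintype A]
    (Z : Matrix (S × A) (S × A) ℂ) (hZ : Z.PosSemidef) :
    (Matrix.of fun s t => ∑ a, ∑ a2, Z (s, a) (t, a2) : Matrix S S ℂ).PosSemidef := by
  classical
  have h := hZ.conjTranspose_mul_mul_same
    (Matrix.of fun (x : S × A) (t : S) => if x.1 = t then (1 : ℂ) else 0)
  convert h using 1
  ext s t
  simp only [Matrix.mul_apply, Matrix.conjTranspose_apply, Matrix.of_apply, Fintype.sum_prod_type,
    apply_ite star, star_one, star_zero, ite_mul, one_mul, zero_mul, mul_ite, mul_one, mul_zero]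
  rw [Finset.sum_eq_single t]
  · simp only [if_true]
    rw [Finset.sum_comm]
    refine Finset.sum_congr rfl fun a _ => ?_
    rw [Finset.sum_eq_single s]
    · simp
    · intro b _ hb
      simp [hb]
    · simp
  · intro b _ hb
    simp [hb]
  · simp

theorem aux_contract {S A I K : Type*} [Fintype S] [Fintype A] [Fintype I] [Fintype K]
    (X : Matrix I I ℂ) (N : Matrix K K ℂ) (hX : X.PosSemidef) (hN : N.PosSemidef)
    (f : S → A → I) (g : S → A → K) :
    (Matrix.of fun s t => ∑ a, ∑ a2, X (f s a) (f t a2) * N (g s a) (g t a2) :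
      Matrix S S ℂ).PosSemidef := by
  classical
  have h := aux_collapse _
    ((hX.kronecker hN).submatrix (fun p : S × A => (f p.1 p.2, g p.1 p.2)))
  simpa only [Matrix.submatrix_apply, Matrix.kroneckerMap_apply] using h

/-- Feasibility-transfer form of Proposition 3: amortization does not increase
a channel's max-relative entropy of entanglement. -/
theorem amortization_emax_feasibility_transfer
    {A' A B' B : Type*}
    [Fintype A'] [Fintype A] [Fintype B'] [Fintype B] [DecidableEq A]
    [Nonempty A'] [Nonempty A] [Nonempty B'] [Nonempty B]
    (ρ : Matrix (A' × A × B') (A' × A × B') ℂ) (J : Matrix (A × B) (A × B) ℂ)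
    (hρ : ρ.PosSemidef) (hJ : J.PosSemidef)
    (C : Matrix (A' × A × B') (A' × A × B') ℂ)
    (hCsep : ∃ (n : ℕ) (P : Fin n → Matrix (A' × A) (A' × A) ℂ)
        (Q : Fin n → Matrix B' B' ℂ),
      (∀ i, (P i).PosSemidef) ∧ (∀ i, (Q i).PosSemidef) ∧
      ∀ x y : A' × A × B',
        C x y = ∑ i, P i (x.1, x.2.1) (y.1, y.2.1) * Q i x.2.2 y.2.2)
    (hρC : (C - ρ).PosSemidef)
    (Y : Matrix (A × B) (A × B) ℂ) (hYsep : InSepCone Y)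
    (hJY : (Y - J).PosSemidef)
    (μ : ℝ) (hμ : (μ • (1 : Matrix A A ℂ) - ptrSnd Y).PosSemidef)
    (E ω : Matrix (A' × B × B') (A' × B × B') ℂ)
    (hE : ∀ x y, E x y = ∑ a : A, ∑ a2 : A,
      C (x.1, a, x.2.2) (y.1, a2, y.2.2) * Y (a, x.2.1) (a2, y.2.1))
    (hω : ∀ x y, ω x y = ∑ a : A, ∑ a2 : A,
      ρ (x.1, a, x.2.2) (y.1, a2, y.2.2) * J (a, x.2.1) (a2, y.2.1)) :
    (E - ω).PosSemidef ∧
    (∃ (m : ℕ) (R : Fin m → Matrix A' A' ℂ)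
        (W : Fin m → Matrix (B × B') (B × B') ℂ),
      (∀ i, (R i).PosSemidef) ∧ (∀ i, (W i).PosSemidef) ∧
      ∀ x y : A' × B × B', E x y = ∑ i, R i x.1 y.1 * W i x.2 y.2) ∧
    (E.trace).re ≤ μ * (C.trace).re := by
  have hC : C.PosSemidef := by simpa using hρC.add hρ
  have hY : Y.PosSemidef := by simpa using hJY.add hJ
  refine ⟨?_, ?_, ?_⟩
  · have h1 := aux_contract (C - ρ) Y hρC hY
      (fun (s : A' × B × B') (a : A) => (s.1, a, s.2.2)) (fun s a => (a, s.2.1))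
    have h2 := aux_contract ρ (Y - J) hρ hJY
      (fun (s : A' × B × B') (a : A) => (s.1, a, s.2.2)) (fun s a => (a, s.2.1))
    convert h1.add h2 using 1
    ext s t
    simp only [Matrix.sub_apply, Matrix.add_apply, Matrix.of_apply, hE, hω,
      ← Finset.sum_add_distrib, ← Finset.sum_sub_distrib]
    refine Finset.sum_congr rfl fun a _ => Finset.sum_congr rfl fun a2 _ => ?_
    ring
  · obtain ⟨n, P, Q, hP, hQ, hPQ⟩ := hCsep
    obtain ⟨k, S, T, hS, hT, hST⟩ := hYsep
    let e := (finProdFinEquiv (m := n) (n := k)).symm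
    refine ⟨n * k,
      fun i => Matrix.of fun s t => ∑ a, ∑ a2, P (e i).1 (s, a) (t, a2) * S (e i).2 a a2,
      fun i => T (e i).2 ⊗ₖ Q (e i).1, fun i => ?_, fun i => ?_, fun x y => ?_⟩
    · exact aux_contract _ _ (hP _) (hS _) (fun s a => (s, a)) (fun _ a => a)
    · exact (hT _).kronecker (hQ _)
    · rw [Equiv.sum_comp e (fun p : Fin n × Fin k =>
        (Matrix.of fun s t => ∑ a, ∑ a2, P p.1 (s, a) (t, a2) * S p.2 a a2 :
          Matrix A' A' ℂ) x.1 y.1 * (T p.2 ⊗ₖ Q p.1) x.2 y.2)]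
      simp only [hE, hPQ, hST, Matrix.of_apply, Matrix.kroneckerMap_apply,
        Fintype.sum_prod_type, Finset.sum_mul, Finset.mul_sum]
      have hcomm : ∀ F : A → A → Fin n → Fin k → ℂ,
          ∑ a, ∑ a2, ∑ j, ∑ i, F a a2 i j = ∑ i, ∑ j, ∑ a, ∑ a2, F a a2 i j := by
        intro F
        calc _ = ∑ p : A × A, ∑ q : Fin n × Fin k, F p.1 p.2 q.1 q.2 := by
              simp only [Fintype.sum_prod_type]
              refine Finset.sum_congr rfl fun a _ => Finset.sum_congr rfl fun a2 _ => ?_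
              exact Finset.sum_comm
          _ = ∑ q : Fin n × Fin k, ∑ p : A × A, F p.1 p.2 q.1 q.2 := Finset.sum_comm
          _ = _ := by simp only [Fintype.sum_prod_type]
      refine (hcomm (fun a a2 i j => P i (x.1, a) (y.1, a2) * Q i x.2.2 y.2.2 *
        (S j a a2 * T j x.2.1 y.2.1))).trans ?_
      refine Finset.sum_congr rfl fun i _ => Finset.sum_congr rfl fun j _ =>
        Finset.sum_congr rfl fun a _ => Finset.sum_congr rfl fun a2 _ => ?_
      ring
  · have h := (aux_contract C _ hC hμ
      (fun (s : A' × B') (a : A) => (s.1, a, s.2)) (fun _ a => a)).trace_nonneg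
    have key : (Matrix.of fun (s t : A' × B') => ∑ a, ∑ a2, C (s.1, a, s.2) (t.1, a2, t.2) *
        (μ • (1 : Matrix A A ℂ) - ptrSnd Y) a a2).trace = (μ : ℂ) * C.trace - E.trace := by
      have e1 : (μ : ℂ) * C.trace = ∑ a', ∑ b', ∑ a, ∑ a2, C (a', a, b') (a', a2, b') *
          (μ • (1 : Matrix A A ℂ)) a a2 := by
        simp only [Matrix.trace, Matrix.diag_apply, Fintype.sum_prod_type, Finset.mul_sum,
          Matrix.smul_apply, Matrix.one_apply, smul_ite, smul_zero, mul_ite, mul_zero,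
          Finset.sum_ite_eq, Finset.mem_univ, if_true]
        refine Finset.sum_congr rfl fun a' _ => ?_
        rw [Finset.sum_comm]
        refine Finset.sum_congr rfl fun b' _ => Finset.sum_congr rfl fun a _ => ?_
        simp [mul_comm]
      have e2 : E.trace = ∑ a', ∑ b', ∑ a, ∑ a2, C (a', a, b') (a', a2, b') *
          ptrSnd Y a a2 := by
        simp only [Matrix.trace, Matrix.diag_apply, Fintype.sum_prod_type, Finset.mul_sum,
          hE, ptrSnd, Matrix.of_apply]
        refine Finset.sum_congr rfl fun a' _ => ?_
        rw [Finset.sum_comm]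
        refine Finset.sum_congr rfl fun b' _ => ?_
        rw [Finset.sum_comm]
        refine Finset.sum_congr rfl fun a _ => ?_
        rw [Finset.sum_comm]
      rw [e1, e2]
      simp only [Matrix.trace, Matrix.diag_apply, Matrix.of_apply, Fintype.sum_prod_type,
        Matrix.sub_apply, mul_sub, Finset.sum_sub_distrib]
    rw [key] at h
    have h' := (Complex.le_def.1 h).1
    simp at h'
    linarith
end
end

section
/- Let A', A, B', B be finite types. Suppose C : Matrix (A' × A × B') (A' × A × B') ℂ admits a separable decomposition across (A'×A):B', i.e. there exist n : ℕ and positive semidefinite P : Fin n → Matrix (A' × A) (A' × A) ℂ, Q : Fin n → Matrix B' B' ℂ with C (a',a,b') (â',â,b̂') = ∑ i, P i (a',a) (â',â) * Q i b' b̂', and suppose Y ∈ SEP(A:B). Then the contraction E : Matrix (A' × B × B') (A' × B × B') ℂ defined by E (a',b,b') (â',b̂,b̂') = ∑_{a,â} C (a',a,b') (â',â,b̂') * Y (a,b) (â,b̂) admits a separable decomposition across A':(B×B'): there exist m : ℕ and positive semidefinite R : Fin m → Matrix A' A' ℂ, W : Fin m → Matrix (B × B') (B × B') ℂ with E (a',b,b')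 (â',b̂,b̂') = ∑ i, R i a' â' * W i (b,b') (b̂,b̂'). (This is the separability-preservation step in the proof of Proposition 3.) -/
open Matrix ComplexOrder Kronecker

noncomputable section

/-- Contracting a positive semidefinite matrix on `α × β` with one on `β` gives a
positive semidefinite matrix on `α`. -/
theorem posSemidef_contract {α β : Type*} [Fintype α] [Fintype β]
    {P : Matrix (α × β) (α × β) ℂ} {S : Matrix β β ℂ}
    (hP : P.PosSemidef) (hS : S.PosSemidef) :
    (Matrix.of fun x y : α => ∑ a : β, ∑ b : β, P (x, a) (y, b) * S a b).PosSemidef := by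
  classical
  have hM := ((hP.kronecker hS).submatrix (fun p : α × β => (p, p.2)))
  have h := hM.conjTranspose_mul_mul_same
    (Matrix.of fun (p : α × β) (x : α) => if p.1 = x then (1 : ℂ) else 0)
  have key : (Matrix.of fun x y : α => ∑ a : β, ∑ b : β, P (x, a) (y, b) * S a b) =
      (Matrix.of fun (p : α × β) (x : α) => if p.1 = x then (1 : ℂ) else 0)ᴴ *
        (P ⊗ₖ S).submatrix (fun p : α × β => (p, p.2)) (fun p : α × β => (p, p.2)) *
        (Matrix.of fun (p : α × β) (x : α) => if p.1 = x then (1 : ℂ) else 0) := by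
    ext x y
    simp only [Matrix.mul_apply, Matrix.of_apply, Matrix.conjTranspose_apply,
      Matrix.submatrix_apply, Matrix.kroneckerMap_apply, Fintype.sum_prod_type_right]
    simp only [apply_ite star, star_one, star_zero, ite_mul, one_mul, zero_mul, mul_ite,
      mul_one, mul_zero, Finset.sum_ite_eq', Finset.mem_univ, if_true]
    exact Finset.sum_comm
  rw [key]
  exact h

/-- Separability preservation: the contraction of a matrix separable across
`(A'×A):B'` with one separable across `A:B` is separable across `A':(B×B')`. -/
theorem contraction_preserves_separability
    {A' A B' B : Type*} [Fintype A'] [Fintype A] [Fintype B'] [Fintype B]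
    (C : Matrix (A' × A × B') (A' × A × B') ℂ)
    (hCsep : ∃ (n : ℕ) (P : Fin n → Matrix (A' × A) (A' × A) ℂ)
        (Q : Fin n → Matrix B' B' ℂ),
      (∀ i, (P i).PosSemidef) ∧ (∀ i, (Q i).PosSemidef) ∧
      ∀ x y : A' × A × B',
        C x y = ∑ i, P i (x.1, x.2.1) (y.1, y.2.1) * Q i x.2.2 y.2.2)
    (Y : Matrix (A × B) (A × B) ℂ) (hYsep : InSepCone Y)
    (E : Matrix (A' × B × B') (A' × B × B') ℂ)
    (hE : ∀ x y, E x y = ∑ a : A, ∑ a2 : A,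
      C (x.1, a, x.2.2) (y.1, a2, y.2.2) * Y (a, x.2.1) (a2, y.2.1)) :
    ∃ (m : ℕ) (R : Fin m → Matrix A' A' ℂ)
        (W : Fin m → Matrix (B × B') (B × B') ℂ),
      (∀ i, (R i).PosSemidef) ∧ (∀ i, (W i).PosSemidef) ∧
      ∀ x y : A' × B × B', E x y = ∑ i, R i x.1 y.1 * W i x.2 y.2 := by
  obtain ⟨n, P, Q, hP, hQ, hC⟩ := hCsep
  obtain ⟨k, S, T, hS, hT, hY⟩ := hYsep
  refine ⟨n * k,
    fun i => Matrix.of fun x y => ∑ a : A, ∑ b : A,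
      P (finProdFinEquiv.symm i).1 (x, a) (y, b) * S (finProdFinEquiv.symm i).2 a b,
    fun i => T (finProdFinEquiv.symm i).2 ⊗ₖ Q (finProdFinEquiv.symm i).1,
    fun i => posSemidef_contract (hP _) (hS _), fun i => (hT _).kronecker (hQ _), ?_⟩
  intro x y
  rw [Equiv.sum_comp finProdFinEquiv.symm (fun p : Fin n × Fin k =>
    (Matrix.of fun x y => ∑ a : A, ∑ b : A, P p.1 (x, a) (y, b) * S p.2 a b) x.1 y.1 *
      (T p.2 ⊗ₖ Q p.1) x.2 y.2), hE]
  simp only [hC, hY, Matrix.of_apply, Matrix.kroneckerMap_apply, Finset.sum_mul_sum,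
    Fintype.sum_prod_type]
  simp only [Finset.sum_mul]
  rw [Finset.sum_congr rfl fun a _ => Finset.sum_comm, Finset.sum_comm]
  refine Finset.sum_congr rfl fun i _ => ?_
  rw [Finset.sum_congr rfl fun a _ => Finset.sum_comm, Finset.sum_comm]
  refine Finset.sum_congr rfl fun j _ => Finset.sum_congr rfl fun a _ =>
    Finset.sum_congr rfl fun b _ => ?_
  ring
end
end

section
/- Let A and B be finite nonempty types and let ρ : Matrix (A × B) (A × B) ℂ be positive semidefinite with trace ρ = 1 and with T_B(ρ) positive semidefinite (i.e., ρ is a PPT state). Then sInf {t : ℝ | ∃ C D, C.PosSemidef ∧ D.PosSemidef ∧ ρ ≤ T_B(C − D) ∧ t = Re(trace(C + D))} = 1. (Hence the max-Rains relative entropy R_max(A;B)_ρ = log₂ of this value vanishes for PPT states, the fact used for the initial state in the strong-converse proof.) -/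
open Matrix ComplexOrder Kronecker

noncomputable section

/-- For a PPT state `ρ`, the SDP value `W(A;B)_ρ` equals `1`, so the
max-Rains relative entropy vanishes. -/
theorem max_rains_sdp_value_of_ppt_state
    {A B : Type*} [Fintype A] [Fintype B] [Nonempty A] [Nonempty B]
    (ρ : Matrix (A × B) (A × B) ℂ) (hρ : ρ.PosSemidef) (hTr : ρ.trace = 1)
    (hPPT : (ptSnd ρ).PosSemidef) :
    sInf {t : ℝ | ∃ C D : Matrix (A × B) (A × B) ℂ,
        C.PosSemidef ∧ D.PosSemidef ∧ (ptSnd (C - D) - ρ).PosSemidef ∧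
        t = ((C + D).trace).re} = 1 := by
  have key : ∀ X : Matrix (A × B) (A × B) ℂ, (ptSnd X).trace = X.trace := fun X => rfl
  apply IsLeast.csInf_eq
  constructor
  · refine ⟨ptSnd ρ, 0, hPPT, Matrix.PosSemidef.zero, ?_, ?_⟩
    · have h : ptSnd (ptSnd ρ - 0) - ρ = 0 := by
        ext x y
        simp [ptSnd]
      rw [h]
      exact Matrix.PosSemidef.zero
    · rw [add_zero, key, hTr, Complex.one_re]
  · rintro t ⟨C, D, hC, hD, h, rfl⟩
    have h1 := (Complex.le_def.1 h.trace_nonneg).1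
    have h2 := (Complex.le_def.1 hD.trace_nonneg).1
    rw [Matrix.trace_sub, key, hTr, Matrix.trace_sub] at h1
    rw [Matrix.trace_add]
    simp only [Complex.sub_re, Complex.add_re, Complex.zero_re, Complex.one_re] at *
    linarith
end
end
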